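/- Let β > 0, J > 0, b ≥ 0, and let κ > 0 be a constant such that liminf_{N→∞} E[⟨U_N⟩]/N ≥ −κ. Then the lower limit of the mean spin-glass order parameter satisfies liminf_{N→∞} E[q_N] ≥ Φ(2βb·tanh(βb)) − 2κ/(βJ). -/

import Mathlib

open Matrix MeasureTheory ProbabilityTheory

noncomputable section

abbrev Conf (N : ℕ) := Fin N → Fin 2

def Sz (N : ℕ) (j : Fin N) : Matrix (Conf N) (Conf N) ℂ :=
  Matrix.diagonal fun σ => if σ j = 0 then 1 else -1

def Sx (N : ℕ) (j : Fin N) : Matrix (Conf N) (Conf N) ℂ :=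
  Matrix.of fun σ τ => if τ = Function.update σ j (1 - σ j) then 1 else 0

def UN (N : ℕ) (g : Fin N → Fin N → ℝ) : Matrix (Conf N) (Conf N) ℂ :=
  (-(1 / Real.sqrt N)) • ∑ j : Fin N, ∑ k : Fin N,
    if j < k then g j k • (Sz N j * Sz N k) else 0

def HN (N : ℕ) (J b : ℝ) (g : Fin N → Fin N → ℝ) : Matrix (Conf N) (Conf N) ℂ :=
  J • UN N g - b • ∑ j : Fin N, Sx N j

/-- Gibbs expectation (real part of the trace ratio). -/
def gibbs {n : Type*} [Fintype n] [DecidableEq n] (β : ℝ) (H A : Matrix n n ℂ) : ℝ :=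
  ((NormedSpace.exp ((-β) • H) * A).trace / (NormedSpace.exp ((-β) • H)).trace).re

def qN (N : ℕ) (β J b : ℝ) (g : Fin N → Fin N → ℝ) : ℝ :=
  (2 / ((N : ℝ) * ((N : ℝ) - 1))) * ∑ j : Fin N, ∑ k : Fin N,
    if j < k then (gibbs β (HN N J b g) (Sz N j * Sz N k)) ^ 2 else 0

theorem exp_cont {𝔸 : Type*} [NormedRing 𝔸] [NormedAlgebra ℝ 𝔸] [CompleteSpace 𝔸] :
    Continuous (NormedSpace.exp : 𝔸 → 𝔸) := by
  let _ : NormedAlgebra ℚ 𝔸 := NormedAlgebra.restrictScalars ℚ ℝ 𝔸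
  exact NormedSpace.exp_continuous

theorem duhamel_id {𝔸 : Type*} [NormedRing 𝔸] [NormedAlgebra ℝ 𝔸] [CompleteSpace 𝔸] (A B : 𝔸) :
    NormedSpace.exp A - NormedSpace.exp B
      = ∫ s in (0:ℝ)..1, NormedSpace.exp (s • A) * (A - B) * NormedSpace.exp ((1 - s) • B) := by
  have hd : ∀ s : ℝ, HasDerivAt (fun s : ℝ => NormedSpace.exp (s • A) * NormedSpace.exp ((1 - s) • B))
      (NormedSpace.exp (s • A) * (A - B) * NormedSpace.exp ((1 - s) • B)) s := by
    intro s
    have h1 := hasDerivAt_exp_smul_const (𝕂 := ℝ) A s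
    have h2 := (hasDerivAt_exp_smul_const' (𝕂 := ℝ) B (1 - s)).scomp s
      ((hasDerivAt_id s).const_sub 1)
    have h3 := h1.mul h2
    refine h3.congr_deriv ?_
    simp [mul_assoc, sub_eq_add_neg]
    noncomm_ring
  have hc : Continuous (NormedSpace.exp : 𝔸 → 𝔸) := exp_cont
  have := intervalIntegral.integral_eq_sub_of_hasDerivAt (a := (0:ℝ)) (b := 1) (fun s _ => hd s)
    (Continuous.intervalIntegrable (by fun_prop) _ _)
  rw [this]; simp

theorem hasDerivAt_exp_line {𝔸 : Type*} [NormedRing 𝔸] [NormedAlgebra ℝ 𝔸] [CompleteSpace 𝔸]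
    (A B : 𝔸) (t : ℝ) :
    HasDerivAt (fun t : ℝ => NormedSpace.exp (A + t • B))
      (∫ s in (0:ℝ)..1, NormedSpace.exp (s • (A + t • B)) * B *
        NormedSpace.exp ((1 - s) • (A + t • B))) t := by
  have hc : Continuous (NormedSpace.exp : 𝔸 → 𝔸) := exp_cont
  have hcont : Continuous (fun u : ℝ => ∫ s in (0:ℝ)..1, NormedSpace.exp (s • (A + u • B)) * B *
        NormedSpace.exp ((1 - s) • (A + t • B))) := by
    apply intervalIntegral.continuous_parametric_intervalIntegral_of_continuous'
    simp only [Function.uncurry_def]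
    fun_prop
  rw [hasDerivAt_iff_tendsto_slope]
  have h2 := (hcont.tendsto t).mono_left (nhdsWithin_le_nhds (s := {t}ᶜ))
  refine h2.congr' ?_
  filter_upwards [self_mem_nhdsWithin] with u hu
  have hu' : u - t ≠ 0 := sub_ne_zero.mpr hu
  rw [slope_def_module, duhamel_id]
  have : A + u • B - (A + t • B) = (u - t) • B := by rw [sub_smul]; abel
  rw [this]
  simp only [mul_smul_comm, smul_mul_assoc]
  rw [intervalIntegral.integral_smul, smul_smul, inv_mul_cancel₀ hu', one_smul]

theorem hasDerivAt_exp_line_comp {𝔸 : Type*} [NormedRing 𝔸] [NormedAlgebra ℝ 𝔸] [CompleteSpace 𝔸]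
    (A B : 𝔸) (t : ℝ) (L : 𝔸 →L[ℝ] ℝ) :
    HasDerivAt (fun t : ℝ => L (NormedSpace.exp (A + t • B)))
      (∫ s in (0:ℝ)..1, L (NormedSpace.exp (s • (A + t • B)) * B *
        NormedSpace.exp ((1 - s) • (A + t • B)))) t := by
  have hc : Continuous (NormedSpace.exp : 𝔸 → 𝔸) := exp_cont
  have h := L.hasFDerivAt.comp_hasDerivAt t (hasDerivAt_exp_line A B t)
  refine h.congr_deriv ?_
  rw [← ContinuousLinearMap.intervalIntegral_comp_comm]
  exact Continuous.intervalIntegrable (by fun_prop) _ _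

section MatrixPart
open scoped Matrix.Norms.Operator
variable {n : Type*} [Fintype n] [DecidableEq n]

/-- Real part of the trace of `e^M A`. -/
def trR (M A : Matrix n n ℂ) : ℝ := (NormedSpace.exp M * A).trace.re

/-- Unnormalized Duhamel inner product of `B` with itself. -/
def duh (M B : Matrix n n ℂ) : ℝ :=
  ∫ s in (0:ℝ)..1, (NormedSpace.exp (s • M) * B * NormedSpace.exp ((1 - s) • M) * B).trace.re

theorem cont_exp_matrix : Continuous (NormedSpace.exp : Matrix n n ℂ → Matrix n n ℂ) := exp_cont

theorem cont_trR (A : Matrix n n ℂ) : Continuous (fun M : Matrix n n ℂ => trR M A) := by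
  unfold trR
  have := cont_exp_matrix (n := n)
  exact Complex.continuous_re.comp (Continuous.matrix_trace (by fun_prop))

theorem cont_duh (B : Matrix n n ℂ) : Continuous (fun M : Matrix n n ℂ => duh M B) := by
  unfold duh
  have := cont_exp_matrix (n := n)
  apply intervalIntegral.continuous_parametric_intervalIntegral_of_continuous'
  simp only [Function.uncurry_def]
  exact Complex.continuous_re.comp (Continuous.matrix_trace (by fun_prop))

/-- `X ↦ Re tr (X A)` as a continuous linear functional. -/
def trCLM (A : Matrix n n ℂ) : Matrix n n ℂ →L[ℝ] ℝ :=
  { toFun := fun X => (X * A).trace.re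
    map_add' := by intro X Y; simp [add_mul]
    map_smul' := by intro c X; simp
    cont := Complex.continuous_re.comp (Continuous.matrix_trace (by fun_prop)) }

theorem hasDerivAt_trR (M B A : Matrix n n ℂ) (t : ℝ) :
    HasDerivAt (fun t : ℝ => trR (M + t • B) A)
      (∫ s in (0:ℝ)..1, (NormedSpace.exp (s • (M + t • B)) * B *
        NormedSpace.exp ((1 - s) • (M + t • B)) * A).trace.re) t := by
  exact hasDerivAt_exp_line_comp (𝔸 := Matrix n n ℂ) M B t (trCLM A)

theorem hasDerivAt_trR_self (M B : Matrix n n ℂ) (t : ℝ) :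
    HasDerivAt (fun t : ℝ => trR (M + t • B) B) (duh (M + t • B) B) t :=
  hasDerivAt_trR M B B t

theorem hasDerivAt_trR_one (M B : Matrix n n ℂ) (t : ℝ) :
    HasDerivAt (fun t : ℝ => trR (M + t • B) 1) (trR (M + t • B) B) t := by
  refine (hasDerivAt_trR M B 1 t).congr_deriv ?_
  have : ∀ s : ℝ, (NormedSpace.exp (s • (M + t • B)) * B *
        NormedSpace.exp ((1 - s) • (M + t • B)) * 1).trace.re = trR (M + t • B) B := by
    intro s
    unfold trR
    rw [mul_one, Matrix.trace_mul_comm, ← mul_assoc, ← Matrix.exp_add_of_commute, ← add_smul]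
    · simp
    · exact ((Commute.refl _).smul_left _).smul_right _
  simp_rw [this]
  simp

end MatrixPart
section SpectralPart
variable {n : Type*} [Fintype n] [DecidableEq n]

theorem spectral_exists {M : Matrix n n ℂ} (hM : M.IsHermitian) :
    ∃ (U : Matrix n n ℂ) (lam : n → ℝ), U * Uᴴ = 1 ∧ Uᴴ * U = 1 ∧
      M = U * diagonal (fun i => ((lam i : ℝ) : ℂ)) * Uᴴ ∧
      ∀ s : ℝ, NormedSpace.exp (s • M)
        = U * diagonal (fun i => ((Real.exp (s * lam i) : ℝ) : ℂ)) * Uᴴ := by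
  have h1 : (hM.eigenvectorUnitary : Matrix n n ℂ) * (hM.eigenvectorUnitary : Matrix n n ℂ)ᴴ = 1 :=
    Unitary.mul_star_self_of_mem hM.eigenvectorUnitary.2
  have h2 : (hM.eigenvectorUnitary : Matrix n n ℂ)ᴴ * (hM.eigenvectorUnitary : Matrix n n ℂ) = 1 :=
    Unitary.star_mul_self_of_mem hM.eigenvectorUnitary.2
  have h3 : M = (hM.eigenvectorUnitary : Matrix n n ℂ) *
      diagonal (fun i => ((hM.eigenvalues i : ℝ) : ℂ)) * (hM.eigenvectorUnitary : Matrix n n ℂ)ᴴ := by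
    have := hM.spectral_theorem
    rw [Unitary.conjStarAlgAut_apply] at this
    exact this
  refine ⟨hM.eigenvectorUnitary, hM.eigenvalues, h1, h2, h3, ?_⟩
  intro s
  have hinv : (hM.eigenvectorUnitary : Matrix n n ℂ)⁻¹ = (hM.eigenvectorUnitary : Matrix n n ℂ)ᴴ :=
    Matrix.inv_eq_right_inv h1
  have hu : IsUnit (hM.eigenvectorUnitary : Matrix n n ℂ) := IsUnit.of_mul_eq_one _ h1
  have h4 : s • M = (hM.eigenvectorUnitary : Matrix n n ℂ) *
      diagonal (fun i => ((s * hM.eigenvalues i : ℝ) : ℂ)) *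
        (hM.eigenvectorUnitary : Matrix n n ℂ)⁻¹ := by
    rw [hinv]
    conv_lhs => rw [h3]
    rw [← smul_mul_assoc, ← mul_smul_comm]
    congr 2
    ext i j
    by_cases h : i = j
    · subst h; simp
    · simp [h]
  rw [h4, Matrix.exp_conj _ _ hu, Matrix.exp_diagonal, hinv]
  congr 3
  ext i
  rw [Pi.exp_def]
  simp [Complex.exp_eq_exp_ℂ]

theorem trace_formula (U B : Matrix n n ℂ) (hB : B.IsHermitian) (f g : n → ℝ) :
    ((U * diagonal (fun i => ((f i : ℝ) : ℂ)) * Uᴴ) * B *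
      (U * diagonal (fun i => ((g i : ℝ) : ℂ)) * Uᴴ) * B).trace.re
      = ∑ i, ∑ j, f i * g j * Complex.normSq ((Uᴴ * B * U) i j) := by
  set C := Uᴴ * B * U with hC
  have hCh : Cᴴ = C := by
    rw [hC]; simp [Matrix.conjTranspose_mul, hB.eq, mul_assoc]
  have e1 : ((U * diagonal (fun i => ((f i : ℝ) : ℂ)) * Uᴴ) * B *
      (U * diagonal (fun i => ((g i : ℝ) : ℂ)) * Uᴴ) * B).trace
      = (diagonal (fun i => ((f i : ℝ) : ℂ)) * C * (diagonal (fun i => ((g i : ℝ) : ℂ)) * C)).trace := by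
    rw [hC, mul_assoc U, mul_assoc U, mul_assoc U, mul_assoc U, Matrix.trace_mul_comm]
    simp only [mul_assoc]
  rw [e1, Matrix.trace, Complex.re_sum]
  refine Finset.sum_congr rfl fun i _ => ?_
  rw [Matrix.diag_apply, Matrix.mul_apply, Complex.re_sum]
  refine Finset.sum_congr rfl fun j _ => ?_
  rw [Matrix.diagonal_mul, Matrix.diagonal_mul]
  have : C j i = (starRingEnd ℂ) (C i j) := by
    conv_lhs => rw [← hCh]
    rfl
  rw [this]
  have h2 : (f i : ℂ) * C i j * ((g j : ℂ) * (starRingEnd ℂ) (C i j))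
      = ((f i * g j * Complex.normSq (C i j) : ℝ) : ℂ) := by
    push_cast
    rw [← Complex.mul_conj]; ring
  rw [h2, Complex.ofReal_re]

theorem spectral_data {M B : Matrix n n ℂ} (hM : M.IsHermitian) (hB : B.IsHermitian) :
    ∃ (lam : n → ℝ) (W : n → n → ℝ), (∀ i j, 0 ≤ W i j) ∧ (∀ i j, W i j = W j i) ∧
      trR M (B * B) = ∑ i, ∑ j, Real.exp (lam i) * W i j ∧
      (∀ s : ℝ, (NormedSpace.exp (s • M) * B * NormedSpace.exp ((1 - s) • M) * B).trace.re
        = ∑ i, ∑ j, Real.exp (s * lam i + (1 - s) * lam j) * W i j) ∧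
      trR M (M * (B * B)) = ∑ i, ∑ j, Real.exp (lam i) * lam i * W i j ∧
      trR M (B * M * B) = ∑ i, ∑ j, Real.exp (lam i) * lam j * W i j := by
  obtain ⟨U, lam, h1, h2, h3, h4⟩ := spectral_exists hM
  have hone : (1 : Matrix n n ℂ) = U * diagonal (fun i => (((fun _ => 1 : n → ℝ) i : ℝ) : ℂ)) * Uᴴ := by
    simp [h1]
  have hexp : NormedSpace.exp M = U * diagonal (fun i => ((Real.exp (lam i) : ℝ) : ℂ)) * Uᴴ := by
    have := h4 1
    simpa using this
  have hexpM : NormedSpace.exp M * M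
      = U * diagonal (fun i => ((Real.exp (lam i) * lam i : ℝ) : ℂ)) * Uᴴ := by
    rw [hexp]
    conv_lhs => rw [h3]
    have : U * diagonal (fun i => ((Real.exp (lam i) : ℝ) : ℂ)) * Uᴴ *
        (U * diagonal (fun i => ((lam i : ℝ) : ℂ)) * Uᴴ)
        = U * (diagonal (fun i => ((Real.exp (lam i) : ℝ) : ℂ)) * (Uᴴ * U) *
          diagonal (fun i => ((lam i : ℝ) : ℂ))) * Uᴴ := by simp only [mul_assoc]
    rw [this, h2, mul_one, Matrix.diagonal_mul_diagonal]
    simp only [Complex.ofReal_mul]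
  refine ⟨lam, fun i j => Complex.normSq ((Uᴴ * B * U) i j), fun i j => Complex.normSq_nonneg _,
    ?_, ?_, ?_, ?_, ?_⟩
  · intro i j
    have hCh : (Uᴴ * B * U)ᴴ = Uᴴ * B * U := by
      simp [Matrix.conjTranspose_mul, hB.eq, mul_assoc]
    have h5 : (Uᴴ * B * U) i j = (starRingEnd ℂ) ((Uᴴ * B * U) j i) := by
      conv_lhs => rw [← hCh]
      rfl
    simp only [h5, Complex.normSq_conj]
  · have := trace_formula U B hB (fun i => Real.exp (lam i)) (fun _ => 1)
    rw [← hone, ← hexp] at this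
    unfold trR
    rw [← mul_assoc]
    simpa using this
  · intro s
    have := trace_formula U B hB (fun i => Real.exp (s * lam i)) (fun i => Real.exp ((1 - s) * lam i))
    rw [← h4, ← h4] at this
    rw [this]
    simp only [Real.exp_add]
  · have := trace_formula U B hB (fun i => Real.exp (lam i) * lam i) (fun _ => 1)
    rw [← hone, ← hexpM] at this
    unfold trR
    rw [← mul_assoc, ← mul_assoc]
    simpa using this
  · have := trace_formula U B hB (fun i => Real.exp (lam i)) lam
    rw [← h3, ← hexp] at this
    unfold trR
    rw [← mul_assoc, ← mul_assoc]
    simpa using this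

theorem trR_one_pos [Nonempty n] {M : Matrix n n ℂ} (hM : M.IsHermitian) :
    0 < trR M 1 ∧ (NormedSpace.exp M).trace = ((trR M 1 : ℝ) : ℂ) := by
  obtain ⟨U, lam, h1, h2, h3, h4⟩ := spectral_exists hM
  have hexp : NormedSpace.exp M = U * diagonal (fun i => ((Real.exp (lam i) : ℝ) : ℂ)) * Uᴴ := by
    have := h4 1
    simpa using this
  have : (NormedSpace.exp M).trace = ((∑ i, Real.exp (lam i) : ℝ) : ℂ) := by
    rw [hexp, mul_assoc, Matrix.trace_mul_comm, mul_assoc, h2, mul_one, Matrix.trace_diagonal]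
    push_cast; rfl
  have h5 : trR M 1 = ∑ i, Real.exp (lam i) := by
    unfold trR; rw [mul_one, this, Complex.ofReal_re]
  rw [h5]
  exact ⟨Finset.sum_pos (fun i _ => Real.exp_pos _) Finset.univ_nonempty, this⟩

theorem trR_sq_nonneg {M B : Matrix n n ℂ} (hM : M.IsHermitian) (hB : B.IsHermitian) :
    0 ≤ trR M (B * B) := by
  obtain ⟨lam, W, hW, -, h, -⟩ := spectral_data hM hB
  rw [h]
  exact Finset.sum_nonneg fun i _ => Finset.sum_nonneg fun j _ =>
    mul_nonneg (Real.exp_pos _).le (hW i j)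

theorem trR_add (M A B : Matrix n n ℂ) : trR M (A + B) = trR M A + trR M B := by
  simp [trR, mul_add]

theorem trR_smul (M A : Matrix n n ℂ) (c : ℝ) : trR M (c • A) = c * trR M A := by
  simp [trR]

theorem abs_trR_le {M B : Matrix n n ℂ} (hM : M.IsHermitian) (hB : B.IsHermitian) (hBB : B * B = 1) :
    |trR M B| ≤ trR M 1 := by
  have h1 := trR_sq_nonneg hM (B := 1 + B) (Matrix.isHermitian_one.add hB)
  have h2 := trR_sq_nonneg hM (B := 1 - B) (Matrix.isHermitian_one.sub hB)
  have e1 : (1 + B) * (1 + B) = (2:ℝ) • 1 + (2:ℝ) • B := by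
    simp only [mul_add, add_mul, hBB, mul_one, one_mul, two_smul]; abel
  have e2 : (1 - B) * (1 - B) = (2:ℝ) • 1 + (-2:ℝ) • B := by
    simp only [mul_sub, sub_mul, hBB, mul_one, one_mul, two_smul, neg_smul]; abel
  rw [e1, trR_add, trR_smul, trR_smul] at h1
  rw [e2, trR_add, trR_smul, trR_smul] at h2
  rw [abs_le]; constructor <;> linarith

theorem duh_bounds {M B : Matrix n n ℂ} (hM : M.IsHermitian) (hB : B.IsHermitian) (hBB : B * B = 1) :
    0 ≤ duh M B ∧ duh M B ≤ trR M 1 := by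
  obtain ⟨lam, W, hW, hs, h1, h2, -⟩ := spectral_data hM hB
  unfold duh
  simp_rw [h2]
  rw [hBB] at h1
  constructor
  · apply intervalIntegral.integral_nonneg zero_le_one
    intro s _
    exact Finset.sum_nonneg fun i _ => Finset.sum_nonneg fun j _ =>
      mul_nonneg (Real.exp_pos _).le (hW i j)
  · have : ∫ s in (0:ℝ)..1, trR M 1 = trR M 1 := by simp
    rw [← this]
    apply intervalIntegral.integral_mono_on zero_le_one
      (Continuous.intervalIntegrable (by fun_prop) _ _) (by simp)
    intro s hs'
    have h3 : trR M 1 = ∑ i, ∑ j, (s * Real.exp (lam i) + (1 - s) * Real.exp (lam j)) * W i j := by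
      have : ∑ i, ∑ j, Real.exp (lam j) * W i j = trR M 1 := by
        rw [h1, Finset.sum_comm]
        exact Finset.sum_congr rfl fun i _ => Finset.sum_congr rfl fun j _ => by rw [hs]
      have h4 : ∑ i, ∑ j, (s * Real.exp (lam i) + (1 - s) * Real.exp (lam j)) * W i j
          = s * (∑ i, ∑ j, Real.exp (lam i) * W i j)
            + (1 - s) * ∑ i, ∑ j, Real.exp (lam j) * W i j := by
        simp only [add_mul, Finset.sum_add_distrib, mul_assoc, Finset.mul_sum]
      rw [h4, ← h1, this]; ring
    rw [h3]
    refine Finset.sum_le_sum fun i _ => Finset.sum_le_sum fun j _ =>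
      mul_le_mul_of_nonneg_right ?_ (hW i j)
    have := convexOn_exp.2 (Set.mem_univ (lam i)) (Set.mem_univ (lam j)) hs'.1
      (sub_nonneg.2 hs'.2) (by ring)
    simpa using this

end SpectralPart
section ScalarPart

theorem nonneg_of_deriv_nonneg {f f' : ℝ → ℝ} (hd : ∀ x, HasDerivAt f (f' x) x) (h0 : 0 ≤ f 0)
    (hf' : ∀ x, 0 ≤ x → 0 ≤ f' x) : ∀ x, 0 ≤ x → 0 ≤ f x := by
  intro x hx
  have hm : MonotoneOn f (Set.Ici 0) := by
    apply monotoneOn_of_deriv_nonneg (convex_Ici 0)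
      (fun x _ => (hd x).continuousAt.continuousWithinAt)
      (fun x _ => (hd x).differentiableAt.differentiableWithinAt)
    intro y hy
    rw [interior_Ici] at hy
    rw [(hd y).deriv]
    exact hf' y (le_of_lt hy)
  exact h0.trans (hm (Set.mem_Ici.2 le_rfl) hx hx)

theorem K_nonneg : ∀ x : ℝ, 0 ≤ x →
    0 ≤ Real.sinh x ^ 2 - x ^ 2 + x * Real.sinh x - x ^ 2 * Real.cosh x := by
  have hs := Real.hasDerivAt_sinh
  have hc := Real.hasDerivAt_cosh
  have cge : ∀ x : ℝ, 0 ≤ x → 0 ≤ Real.cosh x - 1 - x ^ 2 / 2 := by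
    refine nonneg_of_deriv_nonneg (f' := fun x => Real.sinh x - x) (fun x => ?_) (by simp) ?_
    · refine (((hc x).sub_const 1).sub ((hasDerivAt_pow 2 x).div_const 2)).congr_deriv ?_
      simp
    · intro x hx
      have := Real.self_le_sinh_iff.2 hx
      linarith
  have k4 : ∀ x : ℝ, 0 ≤ x → 0 ≤ 8 * (Real.cosh x ^ 2 + Real.sinh x ^ 2) - 8 * Real.cosh x
      - 7 * (x * Real.sinh x) - x ^ 2 * Real.cosh x := by
    intro x hx
    have h1 := cge x hx
    have h2 := Real.self_le_sinh_iff.2 hx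
    have h3 := Real.one_le_cosh x
    have h4 := Real.cosh_sq x
    have h5 : x * Real.sinh x ≤ Real.sinh x ^ 2 := by nlinarith
    have h6 : x ^ 2 * Real.cosh x ≤ 2 * (Real.cosh x - 1) * Real.cosh x := by nlinarith
    nlinarith
  have k3 : ∀ x : ℝ, 0 ≤ x → 0 ≤ 8 * (Real.sinh x * Real.cosh x) - 3 * Real.sinh x
      - 5 * (x * Real.cosh x) - x ^ 2 * Real.sinh x := by
    refine nonneg_of_deriv_nonneg (f' := _) (fun x => ?_) (by simp) k4
    refine ((((((hs x).mul (hc x)).const_mul 8).sub ((hs x).const_mul 3)).sub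
      (((hasDerivAt_id x).mul (hc x)).const_mul 5)).sub ((hasDerivAt_pow 2 x).mul (hs x))).congr_deriv ?_
    simp; ring
  have k2 : ∀ x : ℝ, 0 ≤ x → 0 ≤ 4 * Real.sinh x ^ 2 - 3 * (x * Real.sinh x)
      - x ^ 2 * Real.cosh x := by
    refine nonneg_of_deriv_nonneg (f' := _) (fun x => ?_) (by simp) k3
    refine (((((hs x).pow 2).const_mul 4).sub (((hasDerivAt_id x).mul (hs x)).const_mul 3)).sub
      ((hasDerivAt_pow 2 x).mul (hc x))).congr_deriv ?_
    simp; ring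
  have k1 : ∀ x : ℝ, 0 ≤ x → 0 ≤ 2 * (Real.sinh x * Real.cosh x) - 2 * x + Real.sinh x
      - x * Real.cosh x - x ^ 2 * Real.sinh x := by
    refine nonneg_of_deriv_nonneg (f' := _) (fun x => ?_) (by simp) k2
    refine (((((((hs x).mul (hc x)).const_mul 2).sub ((hasDerivAt_id x).const_mul 2)).add (hs x)).sub
      ((hasDerivAt_id x).mul (hc x))).sub ((hasDerivAt_pow 2 x).mul (hs x))).congr_deriv ?_
    have h4 := Real.cosh_sq x
    simp
    linear_combination 2 * h4
  refine nonneg_of_deriv_nonneg (f' := _) (fun x => ?_) (by simp) k1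
  refine (((((hs x).pow 2).sub (hasDerivAt_pow 2 x)).add ((hasDerivAt_id x).mul (hs x))).sub
      ((hasDerivAt_pow 2 x).mul (hc x))).congr_deriv ?_
  simp; ring

/-- slope function, in the variable `x = 2 r`. -/
def slopeS (x : ℝ) : ℝ := 4 * (Real.sinh x - x) / (x ^ 2 * (Real.sinh x + x))

theorem slopeS_antitone : AntitoneOn slopeS (Set.Ioi 0) := by
  have hd : ∀ x : ℝ, 0 < x → HasDerivAt slopeS
      (-(8 * x * (Real.sinh x ^ 2 - x ^ 2 + x * Real.sinh x - x ^ 2 * Real.cosh x)) /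
        (x ^ 2 * (Real.sinh x + x)) ^ 2) x := by
    intro x hx
    have hsx : 0 < Real.sinh x := Real.sinh_pos_iff.2 hx
    have hne : x ^ 2 * (Real.sinh x + x) ≠ 0 := by positivity
    have h := (((Real.hasDerivAt_sinh x).sub (hasDerivAt_id x)).const_mul 4).div
      ((hasDerivAt_pow 2 x).mul ((Real.hasDerivAt_sinh x).add (hasDerivAt_id x))) hne
    refine h.congr_deriv ?_
    simp
    congr 1
    ring
  apply antitoneOn_of_deriv_nonpos (convex_Ioi 0)
    (fun x hx => (hd x hx).continuousAt.continuousWithinAt)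
  · intro x hx
    rw [interior_Ioi] at hx
    exact (hd x hx).differentiableAt.differentiableWithinAt
  · intro x hx
    rw [interior_Ioi] at hx
    rw [(hd x hx).deriv]
    have hx' : 0 < x := hx
    have := K_nonneg x hx'.le
    apply div_nonpos_of_nonpos_of_nonneg
    · have : 0 ≤ 8 * x * (Real.sinh x ^ 2 - x ^ 2 + x * Real.sinh x - x ^ 2 * Real.cosh x) := by
        positivity
      linarith
    · positivity

/-- `φ` is supported from below at `x₀` by a line of slope `-s`. -/
def SupportAt (φ x₀ : ℝ) : Prop :=
  ∃ s : ℝ, 0 ≤ s ∧ ∀ r : ℝ, 0 < r →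
    (φ + s * x₀) * Real.cosh r ≤ Real.sinh r / r + s * r * Real.sinh r

theorem supportAt_zero : SupportAt 1 0 := by
  refine ⟨1, zero_le_one, fun r hr => ?_⟩
  have : ∀ x : ℝ, 0 ≤ x → 0 ≤ x ^ 2 * Real.sinh x + Real.sinh x - x * Real.cosh x := by
    refine nonneg_of_deriv_nonneg (f' := fun x => x ^ 2 * Real.cosh x + x * Real.sinh x)
      (fun x => ?_) (by simp) ?_
    · refine ((((hasDerivAt_pow 2 x).mul (Real.hasDerivAt_sinh x)).add (Real.hasDerivAt_sinh x)).sub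
        ((hasDerivAt_id x).mul (Real.hasDerivAt_cosh x))).congr_deriv ?_
      simp; ring
    · intro x hx
      have := Real.sinh_nonneg_iff.2 hx
      have := Real.cosh_pos x
      positivity
  have h := this r hr.le
  have e : Real.sinh r / r + 1 * r * Real.sinh r - (1 + 1 * 0) * Real.cosh r
      = (r ^ 2 * Real.sinh r + Real.sinh r - r * Real.cosh r) / r := by field_simp; ring
  have : 0 ≤ (r ^ 2 * Real.sinh r + Real.sinh r - r * Real.cosh r) / r := by positivity
  linarith

theorem supportAt_pos (t : ℝ) (ht : 0 < t) : SupportAt (Real.tanh t / t) (t * Real.tanh t) := by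
  set s := slopeS (2 * t) with hs
  have hs0 : 0 ≤ s := by
    have h1 : 2 * t ≤ Real.sinh (2 * t) := Real.self_le_sinh_iff.2 (by linarith)
    have h2 : 0 ≤ Real.sinh (2 * t) - 2 * t := by linarith
    have h3 : 0 ≤ Real.sinh (2 * t) + 2 * t := by linarith
    rw [hs, slopeS]; positivity
  set L : ℝ → ℝ := fun r => Real.sinh r / Real.cosh r * (r⁻¹ + s * r) with hL
  have hd : ∀ r : ℝ, 0 < r → HasDerivAt L
      ((s - slopeS (2 * r)) * ((r + Real.sinh r * Real.cosh r) / Real.cosh r ^ 2)) r := by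
    intro r hr
    have hc := Real.cosh_pos r
    have h := ((Real.hasDerivAt_sinh r).div (Real.hasDerivAt_cosh r) hc.ne').mul
      ((hasDerivAt_inv hr.ne').add ((hasDerivAt_id r).const_mul s))
    refine h.congr_deriv ?_
    have hsh : 0 < Real.sinh r := Real.sinh_pos_iff.2 hr
    have h4 := Real.cosh_sq r
    simp only [slopeS, Real.sinh_two_mul, id, Pi.add_apply, Pi.div_apply]
    have hne : 2 * Real.sinh r * Real.cosh r + 2 * r ≠ 0 := by positivity
    have hne' : r + Real.sinh r * Real.cosh r ≠ 0 := by positivity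
    have e1 : 4 * (2 * Real.sinh r * Real.cosh r - 2 * r) /
        ((2 * r) ^ 2 * (2 * Real.sinh r * Real.cosh r + 2 * r)) * ((r + Real.sinh r * Real.cosh r) / Real.cosh r ^ 2)
        = (Real.sinh r * Real.cosh r - r) / (r ^ 2 * Real.cosh r ^ 2) := by
      field_simp
      ring
    rw [sub_mul, e1]
    have e2 : Real.cosh r * Real.cosh r - Real.sinh r * Real.sinh r = 1 := by nlinarith
    rw [e2]
    field_simp
    ring
  have hmin : ∀ r : ℝ, 0 < r → L t ≤ L r := by
    intro r hr
    have hfac : ∀ x : ℝ, 0 < x → 0 ≤ (x + Real.sinh x * Real.cosh x) / Real.cosh x ^ 2 := by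
      intro x hx
      have hsh : 0 < Real.sinh x := Real.sinh_pos_iff.2 hx
      have hc := Real.cosh_pos x
      positivity
    rcases le_total r t with h | h
    · have hm : AntitoneOn L (Set.Icc r t) := by
        apply antitoneOn_of_deriv_nonpos (convex_Icc r t)
          (fun x hx => (hd x (hr.trans_le hx.1)).continuousAt.continuousWithinAt)
        · intro x hx
          rw [interior_Icc] at hx
          exact (hd x (hr.trans hx.1)).differentiableAt.differentiableWithinAt
        · intro x hx
          rw [interior_Icc] at hx
          have hx0 : 0 < x := hr.trans hx.1
          rw [(hd x hx0).deriv]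
          refine mul_nonpos_of_nonpos_of_nonneg ?_ (hfac x hx0)
          have := slopeS_antitone (a := 2 * x) (b := 2 * t) (by simp; exact hx0) (by simp; exact ht)
            (by linarith [hx.2])
          linarith
      exact hm ⟨le_rfl, h⟩ ⟨h, le_rfl⟩ h
    · have hm : MonotoneOn L (Set.Icc t r) := by
        apply monotoneOn_of_deriv_nonneg (convex_Icc t r)
          (fun x hx => (hd x (ht.trans_le hx.1)).continuousAt.continuousWithinAt)
        · intro x hx
          rw [interior_Icc] at hx
          exact (hd x (ht.trans hx.1)).differentiableAt.differentiableWithinAt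
        · intro x hx
          rw [interior_Icc] at hx
          have hx0 : 0 < x := ht.trans hx.1
          rw [(hd x hx0).deriv]
          refine mul_nonneg ?_ (hfac x hx0)
          have := slopeS_antitone (a := 2 * t) (b := 2 * x) (by simp; exact ht) (by simp; exact hx0)
            (by linarith [hx.1])
          linarith
      exact hm ⟨le_rfl, h⟩ ⟨h, le_rfl⟩ h
  refine ⟨s, hs0, fun r hr => ?_⟩
  have hc := Real.cosh_pos r
  have h := mul_le_mul_of_nonneg_right (hmin r hr) hc.le
  have e1 : L r * Real.cosh r = Real.sinh r / r + s * r * Real.sinh r := by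
    simp only [hL]; field_simp
  have e2 : L t = Real.tanh t / t + s * (t * Real.tanh t) := by
    simp only [hL, Real.tanh_eq_sinh_div_cosh]; field_simp
  rw [e1, e2] at h
  exact h

theorem logmean_bound {φ x₀ s : ℝ}
    (h : ∀ r : ℝ, 0 < r → (φ + s * x₀) * Real.cosh r ≤ Real.sinh r / r + s * r * Real.sinh r)
    (a b : ℝ) :
    (φ + s * x₀) * ((Real.exp a + Real.exp b) / 2) - s * ((a - b) * (Real.exp a - Real.exp b) / 4)
      ≤ ∫ u in (0:ℝ)..1, Real.exp (u * a + (1 - u) * b) := by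
  have hcl : IsClosed {a : ℝ | (φ + s * x₀) * ((Real.exp a + Real.exp b) / 2)
      - s * ((a - b) * (Real.exp a - Real.exp b) / 4)
      ≤ ∫ u in (0:ℝ)..1, Real.exp (u * a + (1 - u) * b)} := by
    apply isClosed_le (by fun_prop)
    apply intervalIntegral.continuous_parametric_intervalIntegral_of_continuous'
    simp only [Function.uncurry_def]
    fun_prop
  have hsub : ({b}ᶜ : Set ℝ) ⊆ {a : ℝ | (φ + s * x₀) * ((Real.exp a + Real.exp b) / 2)
      - s * ((a - b) * (Real.exp a - Real.exp b) / 4)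
      ≤ ∫ u in (0:ℝ)..1, Real.exp (u * a + (1 - u) * b)} := by
    intro a ha
    have hab : a - b ≠ 0 := sub_ne_zero.2 ha
    have hIntExp : ∫ u in (0:ℝ)..1, Real.exp (u * a + (1 - u) * b)
        = (Real.exp a - Real.exp b) / (a - b) := by
      rw [intervalIntegral.integral_eq_sub_of_hasDerivAt
        (f := fun u => Real.exp (u * a + (1 - u) * b) / (a - b))]
      · simp; ring
      · intro u _
        have h1 : HasDerivAt (fun u : ℝ => u * a + (1 - u) * b) (a - b) u := by
          refine (((hasDerivAt_id u).mul_const a).add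
            (((hasDerivAt_id u).const_sub 1).mul_const b)).congr_deriv ?_
          ring
        refine (h1.exp.div_const (a - b)).congr_deriv ?_
        field_simp
      · exact Continuous.intervalIntegrable (by fun_prop) _ _
    rw [Set.mem_ofPred_eq, hIntExp]
    have hev : ∀ r : ℝ, r ≠ 0 →
        (φ + s * x₀) * Real.cosh r ≤ Real.sinh r / r + s * r * Real.sinh r := by
      intro r hr
      rcases lt_or_gt_of_ne hr with h' | h'
      · have := h (-r) (by linarith)
        simpa using this
      · exact h r h'
    have hr := hev ((a - b) / 2) (by simpa using hab)
    have ea : Real.exp a = Real.exp ((a + b) / 2) * (Real.cosh ((a - b) / 2) + Real.sinh ((a - b) / 2)) := by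
      rw [Real.cosh_add_sinh, ← Real.exp_add]; congr 1; ring
    have eb : Real.exp b = Real.exp ((a + b) / 2) * (Real.cosh ((a - b) / 2) - Real.sinh ((a - b) / 2)) := by
      rw [Real.cosh_sub_sinh, ← Real.exp_add]; congr 1; ring
    rw [ea, eb]
    have := mul_le_mul_of_nonneg_left hr (Real.exp_pos ((a + b) / 2)).le
    have e3 : ∀ m c d : ℝ, (m * (c + d) - m * (c - d)) / (a - b) = m * (d / ((a - b) / 2)) := by
      intro m c d; field_simp; ring
    rw [e3]
    linarith
  have hall := hcl.closure_subset_iff.2 hsub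
  rw [(dense_compl_singleton b).closure_eq] at hall
  exact hall (Set.mem_univ a)

end ScalarPart
section FalkBruch
variable {n : Type*} [Fintype n] [DecidableEq n]

theorem falk_bruch {φ x₀ : ℝ} (hφ : SupportAt φ x₀) {M B : Matrix n n ℂ} (hM : M.IsHermitian)
    (hB : B.IsHermitian) (hBB : B * B = 1)
    (hc : trR M M - trR M (B * M * B) ≤ 2 * x₀ * trR M 1) : φ * trR M 1 ≤ duh M B := by
  obtain ⟨s, hs0, hs⟩ := hφ
  obtain ⟨lam, W, hW, hsym, h1, h2, h3, h4⟩ := spectral_data hM hB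
  rw [hBB] at h1 h3
  rw [mul_one] at h3
  have hduh : duh M B = ∑ i, ∑ j, (∫ u in (0:ℝ)..1, Real.exp (u * lam i + (1 - u) * lam j)) * W i j := by
    unfold duh
    simp_rw [h2]
    rw [intervalIntegral.integral_finsetSum]
    · refine Finset.sum_congr rfl fun i _ => ?_
      rw [intervalIntegral.integral_finsetSum]
      · refine Finset.sum_congr rfl fun j _ => ?_
        rw [intervalIntegral.integral_mul_const]
      · intro j _
        exact Continuous.intervalIntegrable (by fun_prop) _ _
    · intro j _
      exact Continuous.intervalIntegrable (by fun_prop) _ _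
  have h1' : trR M 1 = ∑ i, ∑ j, Real.exp (lam j) * W i j := by
    rw [h1, Finset.sum_comm]
    exact Finset.sum_congr rfl fun i _ => Finset.sum_congr rfl fun j _ => by rw [hsym]
  have h3' : trR M M = ∑ i, ∑ j, Real.exp (lam j) * lam j * W i j := by
    rw [h3, Finset.sum_comm]
    exact Finset.sum_congr rfl fun i _ => Finset.sum_congr rfl fun j _ => by rw [hsym]
  have h4' : trR M (B * M * B) = ∑ i, ∑ j, Real.exp (lam j) * lam i * W i j := by
    rw [h4, Finset.sum_comm]
    exact Finset.sum_congr rfl fun i _ => Finset.sum_congr rfl fun j _ => by rw [hsym]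
  have hsum : ∑ i, ∑ j, ((φ + s * x₀) * ((Real.exp (lam i) + Real.exp (lam j)) / 2)
      - s * ((lam i - lam j) * (Real.exp (lam i) - Real.exp (lam j)) / 4)) * W i j
      = (φ + s * x₀) * trR M 1 - s * ((trR M M - trR M (B * M * B)) / 2) := by
    have e : (φ + s * x₀) * trR M 1 - s * ((trR M M - trR M (B * M * B)) / 2)
        = (φ + s * x₀) / 2 * (trR M 1 + trR M 1)
          - s / 4 * ((trR M M + trR M M) - (trR M (B * M * B) + trR M (B * M * B))) := by ring
    rw [e]
    nth_rewrite 1 [h1]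
    nth_rewrite 1 [h1']
    nth_rewrite 1 [h3]
    nth_rewrite 1 [h3']
    nth_rewrite 1 [h4]
    nth_rewrite 1 [h4']
    simp only [← Finset.sum_add_distrib, ← Finset.sum_sub_distrib, Finset.mul_sum]
    refine Finset.sum_congr rfl fun i _ => Finset.sum_congr rfl fun j _ => ?_
    ring
  have hle : (φ + s * x₀) * trR M 1 - s * ((trR M M - trR M (B * M * B)) / 2) ≤ duh M B := by
    rw [← hsum, hduh]
    exact Finset.sum_le_sum fun i _ => Finset.sum_le_sum fun j _ =>
      mul_le_mul_of_nonneg_right (logmean_bound hs _ _) (hW i j)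
  nlinarith

theorem tanh_bound {A X V : Matrix n n ℂ} (hA : A.IsHermitian) (hX : X.IsHermitian)
    (hXX : X * X = 1) (hVV : V * V = 1) (hVA : V * A * V = A) (hVX : V * X * V = -X)
    (t : ℝ) (ht : 0 ≤ t) :
    trR (A + t • X) X * Real.cosh t ≤ trR (A + t • X) 1 * Real.sinh t := by
  have hH : ∀ t : ℝ, (A + t • X).IsHermitian := fun t =>
    hA.add (by unfold Matrix.IsHermitian; rw [Matrix.conjTranspose_smul, hX.eq]; simp)
  have hd : ∀ t : ℝ, HasDerivAt
      (fun t => trR (A + t • X) 1 * Real.sinh t - trR (A + t • X) X * Real.cosh t)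
      ((trR (A + t • X) 1 - duh (A + t • X) X) * Real.cosh t) t := by
    intro t
    refine (((hasDerivAt_trR_one A X t).mul (Real.hasDerivAt_sinh t)).sub
      ((hasDerivAt_trR_self A X t).mul (Real.hasDerivAt_cosh t))).congr_deriv ?_
    ring
  have h0 : trR A X = 0 := by
    have hVinv : V⁻¹ = V := Matrix.inv_eq_right_inv hVV
    have hu : IsUnit V := IsUnit.of_mul_eq_one _ hVV
    have h1 : NormedSpace.exp A = V * NormedSpace.exp A * V := by
      have := Matrix.exp_conj V A hu
      rw [hVinv, hVA] at this
      exact this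
    have h2 : trR A X = trR A (V * X * V) := by
      unfold trR
      conv_lhs => rw [h1]
      rw [mul_assoc, mul_assoc, Matrix.trace_mul_comm]
      simp only [mul_assoc]
    rw [hVX] at h2
    have h3 : trR A (-X) = - trR A X := by
      have := trR_smul A X (-1)
      simpa using this
    linarith
  have := nonneg_of_deriv_nonneg hd (by simp [h0]) (fun x _ => mul_nonneg
    (sub_nonneg.2 (duh_bounds (hH x) hX hXX).2) (Real.cosh_pos x).le) t ht
  linarith

theorem gibbs_eq [Nonempty n] (β : ℝ) {H : Matrix n n ℂ} (hH : H.IsHermitian) (A : Matrix n n ℂ) :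
    gibbs β H A = trR ((-β) • H) A / trR ((-β) • H) 1 := by
  have hM : ((-β) • H).IsHermitian := by
    unfold Matrix.IsHermitian; rw [Matrix.conjTranspose_smul, hH.eq]; simp
  unfold gibbs
  rw [(trR_one_pos hM).2, Complex.div_ofReal_re]
  rfl

theorem hasDerivAt_ratio [Nonempty n] {M C : Matrix n n ℂ} (hM : M.IsHermitian) (hC : C.IsHermitian)
    (a t : ℝ) :
    HasDerivAt (fun t : ℝ => trR (M + (a * t) • C) C / trR (M + (a * t) • C) 1)
      (a * (duh (M + (a * t) • C) C / trR (M + (a * t) • C) 1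
        - (trR (M + (a * t) • C) C / trR (M + (a * t) • C) 1) ^ 2)) t := by
  have hH : ∀ t : ℝ, (M + t • C).IsHermitian := fun t =>
    hM.add (by unfold Matrix.IsHermitian; rw [Matrix.conjTranspose_smul, hC.eq]; simp)
  have hp := (trR_one_pos (hH (a * t))).1
  have h1 := ((hasDerivAt_trR_self M C (a * t)).div (hasDerivAt_trR_one M C (a * t)) hp.ne')
  have h2 : HasDerivAt (fun t : ℝ => a * t) a t := by
    simpa using (hasDerivAt_id t).const_mul a
  refine (h1.comp t h2).congr_deriv ?_
  field_simp

end FalkBruch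
section SteinPart

theorem pdf_deriv (x : ℝ) : HasDerivAt (gaussianPDFReal 0 1) (-x * gaussianPDFReal 0 1 x) x := by
  rw [gaussianPDFReal_def]
  have h1 : HasDerivAt (fun x : ℝ => -(x - 0) ^ 2 / (2 * ((1 : NNReal) : ℝ))) (-x) x := by
    have h := ((((hasDerivAt_id x).sub_const 0).pow 2).neg).div_const (2 * ((1 : NNReal) : ℝ))
    refine h.congr_deriv ?_
    simp; ring
  refine (h1.exp.const_mul _).congr_deriv ?_
  ring

theorem integrable_mul_pdf : Integrable (fun x : ℝ => x * gaussianPDFReal 0 1 x) := by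
  have h := (integrable_mul_exp_neg_mul_sq (b := 1 / 2) (by norm_num)).const_mul
    ((Real.sqrt (2 * Real.pi * ((1 : NNReal) : ℝ)))⁻¹)
  refine h.congr (Filter.Eventually.of_forall fun x => ?_)
  simp only [gaussianPDFReal_def]
  have : -(x - 0) ^ 2 / (2 * ((1 : NNReal) : ℝ)) = -(1 / 2) * x ^ 2 := by simp; ring
  rw [this]; ring

theorem stein {f f' : ℝ → ℝ} {C C' : ℝ} (hd : ∀ x, HasDerivAt f (f' x) x) (hf : ∀ x, |f x| ≤ C)
    (hf' : ∀ x, |f' x| ≤ C') :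
    ∫ x, x * f x ∂(gaussianReal 0 1) = ∫ x, f' x ∂(gaussianReal 0 1) := by
  have hfc : Continuous f := continuous_iff_continuousAt.2 fun x => (hd x).continuousAt
  have hfm : Measurable f' := by
    have : f' = deriv f := funext fun x => (hd x).deriv.symm
    rw [this]; exact measurable_deriv f
  have hp := integrable_gaussianPDFReal 0 1
  rw [integral_gaussianReal_eq_integral_smul one_ne_zero,
    integral_gaussianReal_eq_integral_smul one_ne_zero]
  have i1 : Integrable (f * (fun x => -x * gaussianPDFReal 0 1 x)) := by
    have := integrable_mul_pdf.neg.bdd_mul (c := C) hfc.aestronglyMeasurable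
      (Filter.Eventually.of_forall hf)
    refine this.congr (Filter.Eventually.of_forall fun x => ?_)
    simp
  have i2 : Integrable (f' * gaussianPDFReal 0 1) :=
    hp.bdd_mul (c := C') hfm.aestronglyMeasurable (Filter.Eventually.of_forall hf')
  have i3 : Integrable (f * gaussianPDFReal 0 1) :=
    hp.bdd_mul (c := C) hfc.aestronglyMeasurable (Filter.Eventually.of_forall hf)
  have h := integral_mul_deriv_eq_deriv_mul_of_integrable (fun x _ => hd x) (fun x _ => pdf_deriv x)
    i1 i2 i3
  have e1 : ∫ x, gaussianPDFReal 0 1 x • (x * f x) = -∫ x, f x * (-x * gaussianPDFReal 0 1 x) := by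
    rw [← integral_neg]
    refine integral_congr_ae (Filter.Eventually.of_forall fun x => ?_)
    simp; ring
  rw [e1, h, neg_neg]
  refine integral_congr_ae (Filter.Eventually.of_forall fun x => ?_)
  simp; ring

theorem integrable_id_gauss : Integrable (fun x : ℝ => x) (gaussianReal 0 1) := by
  have := (memLp_id_gaussianReal (μ := 0) (v := 1) 1)
  simp only [ENNReal.coe_one] at this
  exact memLp_one_iff_integrable.1 this

theorem ibp {Ω E : Type*} [MeasurableSpace Ω] [MeasurableSpace E] (μ : Measure Ω)
    [IsProbabilityMeasure μ] {X : Ω → ℝ} {Y : Ω → E} (hX : Measurable X) (hY : Measurable Y)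
    (hXY : IndepFun X Y μ) (hlaw : μ.map X = gaussianReal 0 1) {f f' : ℝ → E → ℝ} {C C' : ℝ}
    (hfm : Measurable (Function.uncurry f)) (hfm' : Measurable (Function.uncurry f'))
    (hd : ∀ y x, HasDerivAt (fun x => f x y) (f' x y) x)
    (hf : ∀ x y, |f x y| ≤ C) (hf' : ∀ x y, |f' x y| ≤ C') :
    ∫ ω, X ω * f (X ω) (Y ω) ∂μ = ∫ ω, f' (X ω) (Y ω) ∂μ := by
  have hmap := (indepFun_iff_map_prod_eq_prod_map_map hX.aemeasurable hY.aemeasurable).1 hXY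
  have : IsProbabilityMeasure (μ.map Y) := Measure.isProbabilityMeasure_map hY.aemeasurable
  rw [hlaw] at hmap
  have hXYm : Measurable (fun ω => (X ω, Y ω)) := hX.prodMk hY
  have e1 : ∫ ω, X ω * f (X ω) (Y ω) ∂μ
      = ∫ z, z.1 * Function.uncurry f z ∂((gaussianReal 0 1).prod (μ.map Y)) := by
    rw [← hmap, integral_map hXYm.aemeasurable]
    · rfl
    · exact (measurable_fst.mul hfm).aestronglyMeasurable
  have e2 : ∫ ω, f' (X ω) (Y ω) ∂μ
      = ∫ z, Function.uncurry f' z ∂((gaussianReal 0 1).prod (μ.map Y)) := by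
    rw [← hmap, integral_map hXYm.aemeasurable]
    · rfl
    · exact hfm'.aestronglyMeasurable
  rw [e1, e2, integral_prod_symm, integral_prod_symm]
  · refine integral_congr_ae (Filter.Eventually.of_forall fun y => ?_)
    exact stein (hd y) (fun x => hf x y) (fun x => hf' x y)
  · exact Integrable.of_bound hfm'.aestronglyMeasurable C' (Filter.Eventually.of_forall fun z => hf' z.1 z.2)
  · have hi : Integrable (fun z : ℝ × E => z.1) ((gaussianReal 0 1).prod (μ.map Y)) :=
      integrable_id_gauss.comp_fst _
    exact (hi.mul_bdd (c := C) hfm.aestronglyMeasurable (Filter.Eventually.of_forall fun z => hf z.1 z.2))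

end SteinPart
section ModelPart
variable {N : ℕ}

/-- Ordered pairs of sites. -/
abbrev Pairs (N : ℕ) := {q : Fin N × Fin N // q.1 < q.2}

theorem sum_pairs {E : Type*} [AddCommMonoid E] (F : Fin N → Fin N → E) :
    (∑ j : Fin N, ∑ k : Fin N, if j < k then F j k else 0) = ∑ p : Pairs N, F p.1.1 p.1.2 := by
  rw [← Finset.sum_product', Finset.univ_product_univ, ← Finset.sum_filter]
  exact Finset.sum_subtype _ (by simp) _

theorem Sz_herm (j : Fin N) : (Sz N j).IsHermitian := by
  unfold Sz Matrix.IsHermitian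
  rw [Matrix.diagonal_conjTranspose]
  congr 1
  ext σ
  by_cases h : σ j = 0 <;> simp [h]

theorem Sz_sq (j : Fin N) : Sz N j * Sz N j = 1 := by
  unfold Sz
  rw [Matrix.diagonal_mul_diagonal, ← Matrix.diagonal_one]
  congr 1
  ext σ
  by_cases h : σ j = 0 <;> simp [h]

theorem Sz_comm (j k : Fin N) : Commute (Sz N j) (Sz N k) := by
  unfold Sz Commute SemiconjBy
  rw [Matrix.diagonal_mul_diagonal, Matrix.diagonal_mul_diagonal]
  congr 1
  ext σ
  exact mul_comm _ _

theorem fin2_invol (a : Fin 2) : 1 - (1 - a) = a := by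
  fin_cases a <;> rfl

theorem spin_flip_flip (σ : Conf N) (j : Fin N) :
    Function.update (Function.update σ j (1 - σ j)) j
      (1 - (Function.update σ j (1 - σ j)) j) = σ := by
  simp [fin2_invol]

theorem flip_iff (σ τ : Conf N) (j : Fin N) :
    τ = Function.update σ j (1 - σ j) ↔ σ = Function.update τ j (1 - τ j) := by
  constructor
  · rintro rfl; exact (spin_flip_flip σ j).symm
  · rintro rfl; exact (spin_flip_flip τ j).symm

theorem Sx_herm (j : Fin N) : (Sx N j).IsHermitian := by
  unfold Sx Matrix.IsHermitian
  ext σ τ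
  simp only [Matrix.conjTranspose_apply, Matrix.of_apply]
  by_cases h : τ = Function.update σ j (1 - σ j)
  · rw [if_pos h, if_pos ((flip_iff σ τ j).1 h)]; simp
  · rw [if_neg h, if_neg (fun h' => h ((flip_iff σ τ j).2 h'))]; simp

theorem Sx_sq (j : Fin N) : Sx N j * Sx N j = 1 := by
  ext σ τ
  simp only [Sx, Matrix.mul_apply, Matrix.of_apply, Matrix.one_apply, ite_mul, one_mul, zero_mul,
    Finset.sum_ite_eq', Finset.mem_univ, if_true]
  rw [spin_flip_flip]
  simp [eq_comm]

theorem Sz_Sx_self (j : Fin N) : Sz N j * Sx N j * Sz N j = - Sx N j := by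
  ext σ τ
  simp only [Sz, Sx, Matrix.mul_diagonal, Matrix.diagonal_mul, Matrix.of_apply, Matrix.neg_apply]
  by_cases h : τ = Function.update σ j (1 - σ j)
  · rw [if_pos h]
    have : τ j = 1 - σ j := by rw [h]; simp
    rw [this]
    generalize σ j = a
    fin_cases a <;> simp
  · rw [if_neg h]; simp

theorem Sz_Sx_ne {j k : Fin N} (hjk : k ≠ j) : Sz N j * Sx N k * Sz N j = Sx N k := by
  ext σ τ
  simp only [Sz, Sx, Matrix.mul_diagonal, Matrix.diagonal_mul, Matrix.of_apply]
  by_cases h : τ = Function.update σ k (1 - σ k)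
  · rw [if_pos h]
    have : τ j = σ j := by rw [h]; simp [hjk.symm]
    rw [this]
    generalize σ j = a
    fin_cases a <;> simp
  · rw [if_neg h]; simp

/-- pair operator -/
def SP (p : Pairs N) : Matrix (Conf N) (Conf N) ℂ := Sz N p.1.1 * Sz N p.1.2

theorem SP_herm (p : Pairs N) : (SP p).IsHermitian := by
  unfold SP Matrix.IsHermitian
  rw [Matrix.conjTranspose_mul, (Sz_herm _).eq, (Sz_herm _).eq]
  exact (Sz_comm _ _).symm

theorem SP_sq (p : Pairs N) : SP p * SP p = 1 := by
  unfold SP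
  rw [(Sz_comm p.1.2 p.1.1).mul_mul_mul_comm, Sz_sq, Sz_sq, one_mul]

theorem herm_smul {n : Type*} [Fintype n] {A : Matrix n n ℂ} (hA : A.IsHermitian) (c : ℝ) :
    (c • A).IsHermitian := by
  unfold Matrix.IsHermitian; rw [Matrix.conjTranspose_smul, hA.eq]; simp

theorem herm_sum {n ι : Type*} [Fintype n] [Fintype ι] {A : ι → Matrix n n ℂ}
    (hA : ∀ i, (A i).IsHermitian) : (∑ i, A i).IsHermitian := by
  unfold Matrix.IsHermitian
  rw [Matrix.conjTranspose_sum]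
  exact Finset.sum_congr rfl fun i _ => (hA i).eq

theorem UN_eq (g : Fin N → Fin N → ℝ) :
    UN N g = (-(1 / Real.sqrt N)) • ∑ p : Pairs N, g p.1.1 p.1.2 • SP p := by
  unfold UN SP
  rw [sum_pairs (fun j k => g j k • (Sz N j * Sz N k))]

/-- `-β H` as a function of the pair couplings. -/
def MP (β J b : ℝ) (y : Pairs N → ℝ) : Matrix (Conf N) (Conf N) ℂ :=
  (β * J / Real.sqrt N) • (∑ p : Pairs N, y p • SP p) + (β * b) • ∑ j : Fin N, Sx N j

theorem MP_eq (β J b : ℝ) (g : Fin N → Fin N → ℝ) :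
    (-β) • HN N J b g = MP β J b (fun p => g p.1.1 p.1.2) := by
  unfold HN MP
  rw [UN_eq, smul_sub, smul_smul, smul_smul, smul_smul, sub_eq_add_neg, ← neg_smul]
  congr 2
  · ring
  · ring

theorem MP_herm (β J b : ℝ) (y : Pairs N → ℝ) : (MP β J b y).IsHermitian :=
  (herm_smul (herm_sum fun p => herm_smul (SP_herm p) _) _).add
    (herm_smul (herm_sum fun j => Sx_herm j) _)

theorem HN_herm (J b : ℝ) (g : Fin N → Fin N → ℝ) : (HN N J b g).IsHermitian := by
  have h := MP_herm (-1) J b (fun p : Pairs N => g p.1.1 p.1.2)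
  rw [← MP_eq] at h
  simpa using h

theorem MP_update (β J b : ℝ) (y : Pairs N → ℝ) (p : Pairs N) (x : ℝ) :
    MP β J b (Function.update y p x) = MP β J b (Function.update y p 0)
      + (β * J / Real.sqrt N * x) • SP p := by
  have : ∑ q : Pairs N, (Function.update y p x) q • SP q
      = (∑ q : Pairs N, (Function.update y p 0) q • SP q) + x • SP p := by
    have e : x • SP p = ∑ q : Pairs N, if q = p then x • SP p else 0 := by simp
    rw [e, ← Finset.sum_add_distrib]
    refine Finset.sum_congr rfl fun q _ => ?_
    by_cases h : q = p
    · subst h; simp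
    · simp [h]
  unfold MP
  rw [this, smul_add, smul_smul]
  abel

theorem Sz_SPsum (i : Fin N) (y : Pairs N → ℝ) :
    Sz N i * (∑ p : Pairs N, y p • SP p) * Sz N i = ∑ p : Pairs N, y p • SP p := by
  have h : Commute (Sz N i) (∑ p : Pairs N, y p • SP p) :=
    Commute.sum_right _ _ _ fun p _ => ((Sz_comm i _).mul_right (Sz_comm i _)).smul_right _
  rw [h.eq, mul_assoc, Sz_sq, mul_one]

theorem Sx_le_tanh (β J b : ℝ) (hβ : 0 < β) (hb : 0 ≤ b) (y : Pairs N → ℝ) (j : Fin N) :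
    trR (MP β J b y) (Sx N j) ≤ Real.tanh (β * b) * trR (MP β J b y) 1 := by
  set A : Matrix (Conf N) (Conf N) ℂ := (β * J / Real.sqrt N) • (∑ p : Pairs N, y p • SP p)
    + (β * b) • ∑ k ∈ Finset.univ.erase j, Sx N k with hA
  have hM : MP β J b y = A + (β * b) • Sx N j := by
    rw [hA, MP, ← Finset.sum_erase_add _ _ (Finset.mem_univ j), smul_add]
    abel
  have hAh : A.IsHermitian := by
    have : A = MP β J b y - (β * b) • Sx N j := by rw [hM]; abel
    rw [this]
    exact (MP_herm _ _ _ _).sub (herm_smul (Sx_herm j) _)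
  have hVA : Sz N j * A * Sz N j = A := by
    rw [hA, mul_add, add_mul, mul_smul_comm, smul_mul_assoc, Sz_SPsum, mul_smul_comm, smul_mul_assoc,
      Finset.mul_sum, Finset.sum_mul]
    congr 2
    refine Finset.sum_congr rfl fun k hk => ?_
    exact Sz_Sx_ne (Finset.ne_of_mem_erase hk)
  have h := tanh_bound hAh (Sx_herm j) (Sx_sq j) (Sz_sq j) hVA (Sz_Sx_self j) (β * b) (by positivity)
  rw [← hM] at h
  rw [Real.tanh_eq_sinh_div_cosh, div_mul_eq_mul_div, le_div_iff₀ (Real.cosh_pos _)]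
  linarith

theorem SP_Sx (p : Pairs N) (k : Fin N) :
    SP p * Sx N k * SP p = Sx N k - (if k = p.1.1 then (2:ℝ) • Sx N k else 0)
      - (if k = p.1.2 then (2:ℝ) • Sx N k else 0) := by
  have hne : p.1.1 ≠ p.1.2 := ne_of_lt p.2
  have e : SP p * Sx N k * SP p
      = Sz N p.1.1 * (Sz N p.1.2 * Sx N k * Sz N p.1.2) * Sz N p.1.1 := by
    unfold SP
    nth_rewrite 2 [(Sz_comm p.1.1 p.1.2).eq]
    simp only [mul_assoc]
  rw [e]
  by_cases h1 : k = p.1.1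
  · subst h1
    rw [Sz_Sx_ne hne, Sz_Sx_self, if_pos rfl, if_neg hne, two_smul]; abel
  · by_cases h2 : k = p.1.2
    · subst h2
      rw [Sz_Sx_self, mul_neg, neg_mul, Sz_Sx_ne h1, if_neg h1, if_pos rfl, two_smul]; abel
    · rw [Sz_Sx_ne h2, Sz_Sx_ne h1, if_neg h1, if_neg h2]; simp

theorem SP_MP (β J b : ℝ) (y : Pairs N → ℝ) (p : Pairs N) :
    MP β J b y = SP p * MP β J b y * SP p + (2 * (β * b)) • (Sx N p.1.1 + Sx N p.1.2) := by
  have h1 : SP p * (∑ p : Pairs N, y p • SP p) * SP p = ∑ p : Pairs N, y p • SP p := by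
    have h : Commute (SP p) (∑ p : Pairs N, y p • SP p) := by
      refine Commute.sum_right _ _ _ fun q _ => Commute.smul_right ?_ _
      exact ((Sz_comm _ _).mul_right (Sz_comm _ _)).mul_left ((Sz_comm _ _).mul_right (Sz_comm _ _))
    rw [h.eq, mul_assoc, SP_sq, mul_one]
  have h2 : SP p * (∑ j : Fin N, Sx N j) * SP p
      = (∑ j : Fin N, Sx N j) - (2:ℝ) • (Sx N p.1.1 + Sx N p.1.2) := by
    rw [Finset.mul_sum, Finset.sum_mul]
    simp_rw [SP_Sx]
    rw [Finset.sum_sub_distrib, Finset.sum_sub_distrib]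
    simp only [Finset.sum_ite_eq', Finset.mem_univ, if_true, smul_add]
    abel
  unfold MP
  rw [mul_add, add_mul, mul_smul_comm, smul_mul_assoc, h1, mul_smul_comm, smul_mul_assoc, h2, smul_sub,
    smul_smul, mul_comm 2 (β * b)]
  abel

theorem duh_lower (β J b φ : ℝ) (hβ : 0 < β) (hb : 0 ≤ b) (y : Pairs N → ℝ) (p : Pairs N)
    (hφ : SupportAt φ (2 * β * b * Real.tanh (β * b))) :
    φ * trR (MP β J b y) 1 ≤ duh (MP β J b y) (SP p) := by
  apply falk_bruch hφ (MP_herm _ _ _ _) (SP_herm p) (SP_sq p)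
  have h := SP_MP β J b y p
  have h' : trR (MP β J b y) (MP β J b y) = trR (MP β J b y) (SP p * MP β J b y * SP p)
      + 2 * (β * b) * (trR (MP β J b y) (Sx N p.1.1) + trR (MP β J b y) (Sx N p.1.2)) := by
    nth_rewrite 2 [h]
    rw [trR_add, trR_smul, trR_add]
  rw [h']
  have a1 := Sx_le_tanh β J b hβ hb y p.1.1
  have a2 := Sx_le_tanh β J b hβ hb y p.1.2
  have hbb : 0 ≤ β * b := by positivity
  nlinarith

theorem MP_cont (β J b : ℝ) : Continuous (fun y : Pairs N → ℝ => MP β J b y) := by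
  unfold MP
  fun_prop

/-- Gibbs expectation of a pair operator. -/
def mP (β J b : ℝ) (p : Pairs N) (y : Pairs N → ℝ) : ℝ :=
  trR (MP β J b y) (SP p) / trR (MP β J b y) 1

/-- Normalized Duhamel function of a pair operator. -/
def dP (β J b : ℝ) (p : Pairs N) (y : Pairs N → ℝ) : ℝ :=
  duh (MP β J b y) (SP p) / trR (MP β J b y) 1

theorem Zpos (β J b : ℝ) (y : Pairs N → ℝ) : 0 < trR (MP β J b y) 1 :=
  (trR_one_pos (MP_herm _ _ _ _)).1

theorem mP_cont (β J b : ℝ) (p : Pairs N) : Continuous (mP β J b p) :=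
  ((cont_trR _).comp (MP_cont β J b)).div ((cont_trR _).comp (MP_cont β J b))
    fun y => (Zpos β J b y).ne'

theorem dP_cont (β J b : ℝ) (p : Pairs N) : Continuous (dP β J b p) :=
  ((cont_duh _).comp (MP_cont β J b)).div ((cont_trR _).comp (MP_cont β J b))
    fun y => (Zpos β J b y).ne'

theorem mP_abs (β J b : ℝ) (p : Pairs N) (y : Pairs N → ℝ) : |mP β J b p y| ≤ 1 := by
  unfold mP
  have h := Zpos β J b y
  rw [abs_div, abs_of_pos h, div_le_one h]
  exact abs_trR_le (MP_herm _ _ _ _) (SP_herm p) (SP_sq p)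

theorem dP_bounds (β J b : ℝ) (p : Pairs N) (y : Pairs N → ℝ) : 0 ≤ dP β J b p y ∧ dP β J b p y ≤ 1 := by
  unfold dP
  have h := Zpos β J b y
  have h2 := duh_bounds (MP_herm β J b y) (SP_herm p) (SP_sq p)
  exact ⟨div_nonneg h2.1 h.le, (div_le_one h).2 h2.2⟩

theorem dP_lower (β J b φ : ℝ) (hβ : 0 < β) (hb : 0 ≤ b) (p : Pairs N) (y : Pairs N → ℝ)
    (hφ : SupportAt φ (2 * β * b * Real.tanh (β * b))) : φ ≤ dP β J b p y := by
  unfold dP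
  rw [le_div_iff₀ (Zpos β J b y)]
  exact duh_lower β J b φ hβ hb y p hφ

theorem mP_deriv (β J b : ℝ) (p : Pairs N) (y : Pairs N → ℝ) (x : ℝ) :
    HasDerivAt (fun x => mP β J b p (Function.update y p x))
      (β * J / Real.sqrt N * (dP β J b p (Function.update y p x)
        - mP β J b p (Function.update y p x) ^ 2)) x := by
  unfold mP dP
  have h := hasDerivAt_ratio (MP_herm β J b (Function.update y p 0)) (SP_herm p)
    (β * J / Real.sqrt N) x
  simp_rw [← MP_update] at h
  exact h

theorem gibbs_SP (β J b : ℝ) (g : Fin N → Fin N → ℝ) (p : Pairs N) :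
    gibbs β (HN N J b g) (Sz N p.1.1 * Sz N p.1.2) = mP β J b p (fun p => g p.1.1 p.1.2) := by
  rw [gibbs_eq β (HN_herm J b g), MP_eq]
  rfl

theorem trR_sum {n ι : Type*} [Fintype n] [DecidableEq n] [Fintype ι] (M : Matrix n n ℂ)
    (A : ι → Matrix n n ℂ) : trR M (∑ i, A i) = ∑ i, trR M (A i) := by
  simp [trR, Finset.mul_sum, Matrix.trace_sum]

theorem gibbs_UN (β J b : ℝ) (g : Fin N → Fin N → ℝ) :
    gibbs β (HN N J b g) (UN N g)
      = (-(1 / Real.sqrt N)) * ∑ p : Pairs N, g p.1.1 p.1.2 * mP β J b p (fun p => g p.1.1 p.1.2) := by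
  rw [gibbs_eq β (HN_herm J b g), MP_eq, UN_eq, trR_smul, trR_sum, mul_div_assoc, Finset.sum_div]
  congr 1
  refine Finset.sum_congr rfl fun p _ => ?_
  rw [trR_smul, mul_div_assoc]
  rfl

theorem qN_eq (β J b : ℝ) (g : Fin N → Fin N → ℝ) :
    qN N β J b g = (2 / ((N : ℝ) * ((N : ℝ) - 1))) *
      ∑ p : Pairs N, mP β J b p (fun p => g p.1.1 p.1.2) ^ 2 := by
  unfold qN
  rw [sum_pairs (fun j k => gibbs β (HN N J b g) (Sz N j * Sz N k) ^ 2)]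
  simp_rw [gibbs_SP]

theorem card_pairs : (Fintype.card (Pairs N) : ℝ) = (N : ℝ) * ((N : ℝ) - 1) / 2 := by
  have h := sum_pairs (N := N) (fun _ _ => (1 : ℝ))
  have h1 : ∑ p : Pairs N, (1 : ℝ) = Fintype.card (Pairs N) := by simp
  rw [← h1, ← h]
  have h2 : (∑ j : Fin N, ∑ k : Fin N, if j < k then (1:ℝ) else 0)
      = ∑ j : Fin N, ∑ k : Fin N, if k < j then (1:ℝ) else 0 := Finset.sum_comm
  have h3 : (∑ j : Fin N, ∑ k : Fin N, if j < k then (1:ℝ) else 0)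
      + (∑ j : Fin N, ∑ k : Fin N, if k < j then (1:ℝ) else 0)
      + (∑ j : Fin N, ∑ k : Fin N, if j = k then (1:ℝ) else 0) = N * N := by
    rw [← Finset.sum_add_distrib, ← Finset.sum_add_distrib]
    simp_rw [← Finset.sum_add_distrib]
    have : ∀ j k : Fin N, ((if j < k then (1:ℝ) else 0) + (if k < j then (1:ℝ) else 0)
        + (if j = k then (1:ℝ) else 0)) = 1 := by
      intro j k
      rcases lt_trichotomy j k with h | h | h
      · simp [h, h.not_gt, h.ne]
      · simp [h]
      · simp [h, h.not_gt, h.ne']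
    simp_rw [this]
    simp
  have h4 : (∑ j : Fin N, ∑ k : Fin N, if j = k then (1:ℝ) else 0) = N := by simp
  rw [h4, ← h2] at h3
  linarith

end ModelPart
section FinalPart

theorem ibp_pair {Ω : Type*} [MeasurableSpace Ω] (μ : Measure Ω) [IsProbabilityMeasure μ]
    (β J b : ℝ) {N : ℕ} (y : Ω → Pairs N → ℝ) (hmeas : ∀ p, Measurable fun ω => y ω p)
    (hgauss : ∀ p, Measure.map (fun ω => y ω p) μ = gaussianReal 0 1)
    (hindep : iIndepFun (m := fun _ => inferInstance) (fun (p : Pairs N) ω => y ω p) μ)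
    (p : Pairs N) :
    ∫ ω, y ω p * mP β J b p (y ω) ∂μ
      = β * J / Real.sqrt N * (∫ ω, dP β J b p (y ω) ∂μ - ∫ ω, mP β J b p (y ω) ^ 2 ∂μ) := by
  have hym : Measurable y := measurable_pi_iff.2 hmeas
  set Y : Ω → Pairs N → ℝ := fun ω => Function.update (y ω) p 0 with hY
  have hupdc : Continuous (fun z : ℝ × (Pairs N → ℝ) => Function.update z.2 p z.1) :=
    continuous_snd.update p continuous_fst
  have hYm : Measurable Y := hupdc.measurable.comp (measurable_const.prodMk hym)
  have hind : IndepFun (fun ω => y ω p) Y μ := by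
    have h := hindep.indepFun_finset {p} (Finset.univ.erase p) (by simp) hmeas
    have hφ1 : Measurable (fun v : ({p} : Finset (Pairs N)) → ℝ =>
        v ⟨p, Finset.mem_singleton_self p⟩) := measurable_pi_apply _
    have hψ1 : Measurable (fun (v : ↥(Finset.univ.erase p) → ℝ) (q : Pairs N) =>
        if hq : q ≠ p then v ⟨q, Finset.mem_erase.2 ⟨hq, Finset.mem_univ q⟩⟩ else 0) := by
      refine measurable_pi_iff.2 fun q => ?_
      by_cases hq : q ≠ p
      · simp only [dif_pos hq]; exact measurable_pi_apply _
      · simp only [dif_neg hq]; exact measurable_const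
    have h2 := h.comp hφ1 hψ1
    have hYeq : Y = (fun (v : ↥(Finset.univ.erase p) → ℝ) (q : Pairs N) =>
        if hq : q ≠ p then v ⟨q, Finset.mem_erase.2 ⟨hq, Finset.mem_univ q⟩⟩ else 0) ∘
        (fun a (i : ↥(Finset.univ.erase p)) => y a i) := by
      funext ω q
      by_cases hq : q = p
      · subst hq; simp [hY]
      · simp [hY, hq]
    rw [hYeq]
    exact h2
  have hup : ∀ ω, Function.update (Y ω) p (y ω p) = y ω := by
    intro ω; simp [hY]
  have hm' : Measurable (Function.uncurry fun (x : ℝ) (z : Pairs N → ℝ) =>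
      β * J / Real.sqrt N * (dP β J b p (Function.update z p x)
        - mP β J b p (Function.update z p x) ^ 2)) := by
    have h1 := (dP_cont β J b p).comp hupdc
    have h2 := (mP_cont β J b p).comp hupdc
    exact (continuous_const.mul (h1.sub (h2.pow 2))).measurable
  have h := ibp μ (hmeas p) hYm hind (hgauss p)
    (f := fun x z => mP β J b p (Function.update z p x))
    (f' := fun x z => β * J / Real.sqrt N * (dP β J b p (Function.update z p x)
        - mP β J b p (Function.update z p x) ^ 2)) (C := 1) (C' := |β * J / Real.sqrt N| * 1)
    ((mP_cont β J b p).comp hupdc).measurable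
    hm'
    (fun z x => mP_deriv β J b p z x) (fun x z => mP_abs _ _ _ _ _)
    (fun x z => by
      rw [abs_mul]
      refine mul_le_mul_of_nonneg_left ?_ (abs_nonneg _)
      have h1 := dP_bounds β J b p (Function.update z p x)
      have h2 := (sq_le_one_iff_abs_le_one _).2 (mP_abs β J b p (Function.update z p x))
      have h3 := sq_nonneg (mP β J b p (Function.update z p x))
      rw [abs_le]; constructor <;> linarith [h1.1, h1.2])
  simp only [hup] at h
  rw [h, integral_const_mul, integral_sub]
  · refine Integrable.of_bound ((dP_cont β J b p).measurable.comp hym).aestronglyMeasurable 1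
      (Filter.Eventually.of_forall fun ω => ?_)
    have h1 := dP_bounds β J b p (y ω)
    exact abs_le.2 ⟨by linarith [h1.1], h1.2⟩
  · refine Integrable.of_bound
      (((mP_cont β J b p).pow 2).measurable.comp hym).aestronglyMeasurable 1
      (Filter.Eventually.of_forall fun ω => ?_)
    have h2 := (sq_le_one_iff_abs_le_one _).2 (mP_abs β J b p (y ω))
    have h3 := sq_nonneg (mP β J b p (y ω))
    exact abs_le.2 ⟨by linarith, h2⟩

theorem finite_N {Ω : Type*} [MeasurableSpace Ω] (μ : Measure Ω) [IsProbabilityMeasure μ]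
    (β J b φ : ℝ) (hβ : 0 < β) (hb : 0 ≤ b)
    (hφ : SupportAt φ (2 * β * b * Real.tanh (β * b))) (N : ℕ) (hN : 2 ≤ N)
    (g : Ω → Fin N → Fin N → ℝ)
    (hmeas : ∀ (j k : Fin N), Measurable fun ω => g ω j k)
    (hgauss : ∀ (j k : Fin N), j < k → Measure.map (fun ω => g ω j k) μ = gaussianReal 0 1)
    (hindep : iIndepFun (m := fun _ => inferInstance)
      (fun (p : {q : Fin N × Fin N // q.1 < q.2}) ω => g ω p.1.1 p.1.2) μ) :
    ∃ d q : ℝ, φ ≤ d ∧ 0 ≤ d ∧ d ≤ 1 ∧ 0 ≤ q ∧ q ≤ 1 ∧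
      ∫ ω, qN N β J b (g ω) ∂μ = q ∧
      (∫ ω, gibbs β (HN N J b (g ω)) (UN N (g ω)) ∂μ) / N
        = - (β * J * ((N : ℝ) - 1) / (2 * N)) * (d - q) := by
  set y : Ω → Pairs N → ℝ := fun ω p => g ω p.1.1 p.1.2 with hy
  have hmeas' : ∀ p, Measurable fun ω => y ω p := fun p => hmeas _ _
  have hym : Measurable y := measurable_pi_iff.2 hmeas'
  have hgauss' : ∀ p, Measure.map (fun ω => y ω p) μ = gaussianReal 0 1 := fun p => hgauss _ _ p.2
  have hN' : (2 : ℝ) ≤ N := by exact_mod_cast hN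
  have hcard := card_pairs (N := N)
  set c : ℝ := (N : ℝ) * ((N : ℝ) - 1) / 2 with hc
  have hcpos : 0 < c := by
    have : 0 < (N : ℝ) - 1 := by linarith
    rw [hc]; positivity
  have hid : ∀ p, Integrable (fun ω => dP β J b p (y ω)) μ := by
    intro p
    refine Integrable.of_bound ((dP_cont β J b p).measurable.comp hym).aestronglyMeasurable 1
      (Filter.Eventually.of_forall fun ω => ?_)
    have h1 := dP_bounds β J b p (y ω)
    exact abs_le.2 ⟨by linarith [h1.1], h1.2⟩
  have hiq : ∀ p, Integrable (fun ω => mP β J b p (y ω) ^ 2) μ := by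
    intro p
    refine Integrable.of_bound
      (((mP_cont β J b p).pow 2).measurable.comp hym).aestronglyMeasurable 1
      (Filter.Eventually.of_forall fun ω => ?_)
    have h2 := (sq_le_one_iff_abs_le_one _).2 (mP_abs β J b p (y ω))
    have h3 := sq_nonneg (mP β J b p (y ω))
    exact abs_le.2 ⟨by linarith, h2⟩
  have hconst : ∀ a : ℝ, ∫ _ω, a ∂μ = a := by intro a; simp
  have hdl : ∀ p, φ ≤ ∫ ω, dP β J b p (y ω) ∂μ := fun p => by
    rw [← hconst φ]
    exact integral_mono (integrable_const _) (hid p) fun ω => dP_lower β J b φ hβ hb p _ hφ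
  have hd0 : ∀ p, 0 ≤ ∫ ω, dP β J b p (y ω) ∂μ := fun p =>
    integral_nonneg fun ω => (dP_bounds β J b p _).1
  have hd1 : ∀ p, ∫ ω, dP β J b p (y ω) ∂μ ≤ 1 := fun p => by
    rw [← hconst 1]
    exact integral_mono (hid p) (integrable_const _) fun ω => (dP_bounds β J b p _).2
  have hq0 : ∀ p, 0 ≤ ∫ ω, mP β J b p (y ω) ^ 2 ∂μ := fun p =>
    integral_nonneg fun ω => sq_nonneg _
  have hq1 : ∀ p, ∫ ω, mP β J b p (y ω) ^ 2 ∂μ ≤ 1 := fun p => by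
    rw [← hconst 1]
    exact integral_mono (hiq p) (integrable_const _) fun ω =>
      (sq_le_one_iff_abs_le_one _).2 (mP_abs β J b p (y ω))
  have hup : ∀ (F : Pairs N → ℝ) (a : ℝ), (∀ p, F p ≤ a) → (∑ p, F p) / c ≤ a := by
    intro F a h
    rw [div_le_iff₀ hcpos]
    have := Finset.sum_le_sum (s := Finset.univ) fun p _ => h p
    rw [Finset.sum_const, nsmul_eq_mul, Finset.card_univ, hcard] at this
    linarith
  have hlo : ∀ (F : Pairs N → ℝ) (a : ℝ), (∀ p, a ≤ F p) → a ≤ (∑ p, F p) / c := by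
    intro F a h
    rw [le_div_iff₀ hcpos]
    have := Finset.sum_le_sum (s := Finset.univ) fun p _ => h p
    rw [Finset.sum_const, nsmul_eq_mul, Finset.card_univ, hcard] at this
    linarith
  refine ⟨(∑ p, ∫ ω, dP β J b p (y ω) ∂μ) / c, (∑ p, ∫ ω, mP β J b p (y ω) ^ 2 ∂μ) / c,
    hlo _ _ hdl, hlo _ _ hd0, hup _ _ hd1, hlo _ _ hq0, hup _ _ hq1, ?_, ?_⟩
  · simp_rw [qN_eq]
    rw [integral_const_mul, integral_finsetSum _ fun p _ => hiq p]
    rw [div_eq_inv_mul _ c]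
    congr 1
    rw [hc, inv_div]
  · simp_rw [gibbs_UN]
    rw [integral_const_mul, integral_finsetSum]
    · have e : ∀ p, ∫ ω, g ω p.1.1 p.1.2 * mP β J b p (fun p => g ω p.1.1 p.1.2) ∂μ
          = β * J / Real.sqrt N * (∫ ω, dP β J b p (y ω) ∂μ - ∫ ω, mP β J b p (y ω) ^ 2 ∂μ) :=
        fun p => ibp_pair μ β J b y hmeas' hgauss' hindep p
      simp_rw [e]
      rw [← Finset.mul_sum, Finset.sum_sub_distrib]
      have hs : Real.sqrt N * Real.sqrt N = N := Real.mul_self_sqrt (by positivity)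
      have hs0 : 0 < Real.sqrt N := Real.sqrt_pos.2 (by linarith)
      generalize (∑ p, ∫ ω, dP β J b p (y ω) ∂μ) = D
      generalize (∑ p, ∫ ω, mP β J b p (y ω) ^ 2 ∂μ) = A
      have hN1 : (N : ℝ) - 1 ≠ 0 := by linarith
      have hN0 : (N : ℝ) ≠ 0 := by linarith
      rw [hc]
      have e2 : -(1 / Real.sqrt N) * (β * J / Real.sqrt N * (D - A)) / N
          = - (β * J) * (D - A) / (Real.sqrt N * Real.sqrt N * N) := by
        field_simp
      rw [e2, hs]
      field_simp
    · intro p _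
      have hi : Integrable (fun ω => y ω p) μ := by
        have h := integrable_id_gauss
        rw [← hgauss' p] at h
        exact h.comp_measurable (hmeas' p)
      exact hi.mul_bdd (c := 1) ((mP_cont β J b p).measurable.comp hym).aestronglyMeasurable
        (Filter.Eventually.of_forall fun ω => mP_abs _ _ _ _ _)

theorem support_phi (Φ : ℝ → ℝ) (hΦ : ∀ r : ℝ, 0 < r → Φ (r * Real.tanh r) = Real.tanh r / r)
    (hΦ0 : Φ 0 = 1) (x : ℝ) (hx : 0 ≤ x) : SupportAt (Φ x) x := by
  rcases hx.eq_or_lt with h | h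
  · rw [← h, hΦ0]; exact supportAt_zero
  · have hcont : Continuous (fun r : ℝ => r * Real.tanh r) := by
      have : Continuous Real.tanh := by
        have e : Real.tanh = fun r => Real.sinh r / Real.cosh r :=
          funext Real.tanh_eq_sinh_div_cosh
        rw [e]
        exact Real.continuous_sinh.div Real.continuous_cosh fun r => (Real.cosh_pos r).ne'
      exact continuous_id.mul this
    have htend : Filter.Tendsto (fun r : ℝ => r * Real.tanh r) Filter.atTop Filter.atTop := by
      have hlow : ∀ r : ℝ, 1 ≤ r → Real.tanh 1 * r ≤ r * Real.tanh r := by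
        intro r hr
        have : Real.tanh 1 ≤ Real.tanh r := by
          rw [Real.tanh_eq_sinh_div_cosh, Real.tanh_eq_sinh_div_cosh,
            div_le_div_iff₀ (Real.cosh_pos _) (Real.cosh_pos _)]
          have := Real.sinh_sub r 1
          have h2 : 0 ≤ Real.sinh (r - 1) := Real.sinh_nonneg_iff.2 (by linarith)
          linarith
        nlinarith
      have ht1 : 0 < Real.tanh 1 := by
        rw [Real.tanh_eq_sinh_div_cosh]
        exact div_pos (Real.sinh_pos_iff.2 one_pos) (Real.cosh_pos _)
      refine Filter.tendsto_atTop_mono' _ ?_ (Filter.tendsto_id.const_mul_atTop ht1)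
      filter_upwards [Filter.eventually_ge_atTop 1] with r hr using hlow r hr
    obtain ⟨R, hR1, hR2⟩ := ((htend.eventually_ge_atTop x).and (Filter.eventually_ge_atTop 0)).exists
    obtain ⟨r, hr, hrx⟩ := intermediate_value_Icc hR2 hcont.continuousOn
      (show x ∈ Set.Icc _ _ from ⟨by simpa using hx, hR1⟩)
    have hr0 : 0 < r := by
      rcases hr.1.eq_or_lt with h' | h'
      · rw [← h'] at hrx; simp at hrx; linarith
      · exact h'
    simp only at hrx
    rw [← hrx, hΦ r hr0]
    exact supportAt_pos r hr0

end FinalPart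

theorem stmt13
    {Ω : Type*} [MeasurableSpace Ω] (μ : Measure Ω) [IsProbabilityMeasure μ]
    (β J b : ℝ) (hβ : 0 < β) (hJ : 0 < J) (hb : 0 ≤ b)
    (g : (N : ℕ) → Ω → Fin N → Fin N → ℝ)
    (hmeas : ∀ (N : ℕ) (j k : Fin N), Measurable fun ω => g N ω j k)
    (hgauss : ∀ (N : ℕ) (j k : Fin N), j < k →
      Measure.map (fun ω => g N ω j k) μ = gaussianReal 0 1)
    (hindep : ∀ N : ℕ, iIndepFun (m := fun _ => inferInstance)
      (fun (p : {q : Fin N × Fin N // q.1 < q.2}) ω => g N ω p.1.1 p.1.2) μ)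
    (κ : ℝ) (hκpos : 0 < κ)
    (hκ : -κ ≤ Filter.liminf
      (fun N : ℕ => (∫ ω, gibbs β (HN N J b (g N ω)) (UN N (g N ω)) ∂μ) / N)
      Filter.atTop)
    (Φ : ℝ → ℝ) (hΦ : ∀ r : ℝ, 0 < r → Φ (r * Real.tanh r) = Real.tanh r / r)
    (hΦ0 : Φ 0 = 1) :
    Φ (2 * β * b * Real.tanh (β * b)) - 2 * κ / (β * J)
      ≤ Filter.liminf (fun N : ℕ => ∫ ω, qN N β J b (g N ω) ∂μ) Filter.atTop := by
  have hx0 : 0 ≤ 2 * β * b * Real.tanh (β * b) := by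
    have : 0 ≤ Real.tanh (β * b) := by
      rw [Real.tanh_eq_sinh_div_cosh]
      exact div_nonneg (Real.sinh_nonneg_iff.2 (by positivity)) (Real.cosh_pos _).le
    positivity
  have hφ := support_phi Φ hΦ hΦ0 _ hx0
  generalize Φ (2 * β * b * Real.tanh (β * b)) = φ at hφ ⊢
  have key := fun (N : ℕ) (hN : 2 ≤ N) => finite_N μ β J b φ hβ hb hφ N hN (g N) (hmeas N)
    (hgauss N) (hindep N)
  set u : ℕ → ℝ := fun N => (∫ ω, gibbs β (HN N J b (g N ω)) (UN N (g N ω)) ∂μ) / N with hu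
  set Q : ℕ → ℝ := fun N => ∫ ω, qN N β J b (g N ω) ∂μ with hQ
  have hβJ : 0 < β * J := by positivity
  have hfac : ∀ N : ℕ, 2 ≤ N → 0 ≤ β * J * ((N : ℝ) - 1) / (2 * N) ∧
      β * J * ((N : ℝ) - 1) / (2 * N) ≤ β * J := by
    intro N hN
    have hN' : (2 : ℝ) ≤ N := by exact_mod_cast hN
    constructor
    · have : 0 ≤ (N : ℝ) - 1 := by linarith
      positivity
    · rw [div_le_iff₀ (by linarith)]
      nlinarith
  have hubd : ∀ N : ℕ, 2 ≤ N → -(β * J) ≤ u N := by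
    intro N hN
    obtain ⟨d, q, h1, h2, h3, h4, h5, h6, h7⟩ := key N hN
    have h7' : u N = - (β * J * ((N : ℝ) - 1) / (2 * N)) * (d - q) := h7
    rw [h7']
    have := hfac N hN
    nlinarith
  have hbound : Filter.IsBoundedUnder (· ≥ ·) Filter.atTop u :=
    ⟨-(β * J), by
      rw [Filter.eventually_map]
      filter_upwards [Filter.eventually_ge_atTop 2] with N hN using hubd N hN⟩
  have hQcob : Filter.IsCoboundedUnder (· ≥ ·) Filter.atTop Q := by
    apply Filter.IsBoundedUnder.isCoboundedUnder_ge
    refine ⟨1, ?_⟩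
    rw [Filter.eventually_map]
    filter_upwards [Filter.eventually_ge_atTop 2] with N hN
    obtain ⟨d, q, h1, h2, h3, h4, h5, h6, h7⟩ := key N hN
    have h6' : Q N = q := h6
    rw [h6']; exact h5
  refine le_of_forall_pos_le_add fun δ hδ => ?_
  rw [← sub_le_iff_le_add]
  apply Filter.le_liminf_of_le hQcob
  set ε : ℝ := δ * (β * J) / 4 with hε
  have hεpos : 0 < ε := by positivity
  have hev : ∀ᶠ N in Filter.atTop, -(κ + ε) < u N :=
    Filter.eventually_lt_of_lt_liminf (by linarith) hbound
  have hlim : Filter.Tendsto (fun N : ℕ => φ - 2 * (κ + ε) / (β * J) * ((N : ℝ) / ((N : ℝ) - 1)))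
      Filter.atTop (nhds (φ - 2 * (κ + ε) / (β * J) * 1)) := by
    refine tendsto_const_nhds.sub (tendsto_const_nhds.mul ?_)
    have h1 : Filter.Tendsto (fun N : ℕ => 1 + 1 / ((N : ℝ) - 1)) Filter.atTop (nhds (1 + 0)) := by
      refine tendsto_const_nhds.add (Filter.Tendsto.div_atTop tendsto_const_nhds ?_)
      exact Filter.tendsto_atTop_add_const_right _ _ tendsto_natCast_atTop_atTop
    rw [add_zero] at h1
    refine h1.congr' ?_
    filter_upwards [Filter.eventually_ge_atTop 2] with N hN
    have hN' : (2 : ℝ) ≤ N := by exact_mod_cast hN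
    have : (N : ℝ) - 1 ≠ 0 := by linarith
    field_simp
    ring
  have hlt : φ - 2 * κ / (β * J) - δ < φ - 2 * (κ + ε) / (β * J) * 1 := by
    have : 2 * (κ + ε) / (β * J) = 2 * κ / (β * J) + δ / 2 := by
      rw [hε]; field_simp; ring
    rw [this]; linarith
  filter_upwards [hev, hlim.eventually (lt_mem_nhds hlt), Filter.eventually_ge_atTop 2]
    with N h1 h2 hN
  refine h2.le.trans ?_
  obtain ⟨d, q, k1, k2, k3, k4, k5, k6, k7⟩ := key N hN
  have k7' : u N = - (β * J * ((N : ℝ) - 1) / (2 * N)) * (d - q) := k7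
  have k6' : Q N = q := k6
  rw [k6']
  have hN' : (2 : ℝ) ≤ N := by exact_mod_cast hN
  have hN1 : 0 < (N : ℝ) - 1 := by linarith
  rw [k7'] at h1
  have h3 : β * J * ((N : ℝ) - 1) / (2 * N) * (d - q) ≤ κ + ε := by linarith
  have h4 : d - q ≤ 2 * (κ + ε) / (β * J) * ((N : ℝ) / ((N : ℝ) - 1)) := by
    have e : 2 * (κ + ε) / (β * J) * ((N : ℝ) / ((N : ℝ) - 1))
        = (κ + ε) / (β * J * ((N : ℝ) - 1) / (2 * N)) := by
      field_simp
    rw [e, le_div_iff₀ (by positivity)]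
    linarith
  linarith
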